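/- Let ν be a real number with ν ≥ 1. For every integer k ≥ 1 one has j_{ν,k} < λ⁻_{ν−1,k+1} < j′_{ν,k+1} < λ⁺_{ν−1,k+1} < j_{ν,k+1}. -/

import Mathlib

/-- Bessel function of the first kind of real order `ν`, defined via its power series
`J_ν(z) = ∑ₘ (−1)^m / (m! Γ(ν+m+1)) (z/2)^(ν+2m)` (with real-exponent powers). -/
noncomputable def besselJ (ν z : ℝ) : ℝ :=
  ∑' m : ℕ, ((-1 : ℝ) ^ m / (Nat.factorial m * Real.Gamma (ν + m + 1))) *
    (z / 2) ^ (ν + 2 * (m : ℝ))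

/-- `x` (indexed by `k ≥ 1`) enumerates the positive zeroes of `f`: it is strictly
increasing on indices `k ≥ 1`, each `x k` is a positive zero of `f`, and every positive
zero of `f` is some `x k`. -/
def EnumPosZeros (f : ℝ → ℝ) (x : ℕ → ℝ) : Prop :=
  StrictMonoOn x (Set.Ici 1) ∧ (∀ k, 1 ≤ k → 0 < x k ∧ f (x k) = 0) ∧
    ∀ z : ℝ, 0 < z → f z = 0 → ∃ k, 1 ≤ k ∧ x k = z

open Set Filter Topology

noncomputable def bC (ν : ℝ) (m : ℕ) : ℝ :=
  (-1 : ℝ) ^ m / (Nat.factorial m * Real.Gamma (ν + m + 1))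

noncomputable def bF (ν x : ℝ) : ℝ := ∑' m : ℕ, bC ν m * x ^ m

lemma gamma_lb (ν : ℝ) (hν : 0 ≤ ν) (m : ℕ) :
    Real.Gamma (ν + 1) ≤ Real.Gamma (ν + m + 1) := by
  induction m with
  | zero => simp
  | succ n ih =>
    have h : Real.Gamma (ν + n + 1 + 1) = (ν + n + 1) * Real.Gamma (ν + n + 1) :=
      Real.Gamma_add_one (by positivity)
    have e : ν + ((n + 1 : ℕ) : ℝ) + 1 = ν + n + 1 + 1 := by push_cast; ring
    rw [e, h]
    have hp : 0 < Real.Gamma (ν + n + 1) := Real.Gamma_pos_of_pos (by positivity)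
    have : (0 : ℝ) ≤ ν + n := by positivity
    nlinarith

lemma bC_abs (ν : ℝ) (hν : 0 ≤ ν) (m : ℕ) :
    |bC ν m| ≤ (Real.Gamma (ν + 1))⁻¹ * (1 / (Nat.factorial m)) := by
  have hp : 0 < Real.Gamma (ν + 1) := Real.Gamma_pos_of_pos (by positivity)
  have hp2 := gamma_lb ν hν m
  have hf : (0 : ℝ) < Nat.factorial m := by positivity
  unfold bC
  rw [abs_div, abs_pow, abs_neg, abs_one, one_pow, abs_of_pos (by positivity)]
  rw [mul_one_div, ← one_div, div_div, mul_comm]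
  gcongr

lemma bC_summable (ν : ℝ) (hν : 0 ≤ ν) (x : ℝ) : Summable (fun m => bC ν m * x ^ m) := by
  apply Summable.of_norm_bounded
    (g := fun m => (Real.Gamma (ν + 1))⁻¹ * (|x| ^ m / (Nat.factorial m)))
  · exact (Real.summable_pow_div_factorial |x|).mul_left _
  · intro m
    rw [Real.norm_eq_abs, abs_mul, abs_pow]
    calc _ ≤ (Real.Gamma (ν + 1))⁻¹ * (1 / (Nat.factorial m)) * |x| ^ m := by
          gcongr; exact bC_abs ν hν m
      _ = _ := by ring

lemma bC_succ (ν : ℝ) (n : ℕ) : bC ν (n + 1) * (n + 1 : ℝ) = - bC (ν + 1) n := by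
  unfold bC
  have e : ν + ((n + 1 : ℕ) : ℝ) + 1 = ν + 1 + n + 1 := by push_cast; ring
  rw [e, Nat.factorial_succ, pow_succ]
  push_cast
  have : (n : ℝ) + 1 ≠ 0 := by positivity
  field_simp

lemma bC_pred (ν : ℝ) (hν : 1 ≤ ν) (m : ℕ) : bC (ν - 1) m = (ν + m) * bC ν m := by
  unfold bC
  have h : Real.Gamma (ν + m + 1) = (ν + m) * Real.Gamma (ν + m) :=
      Real.Gamma_add_one (by positivity)
  have e : ν - 1 + m + 1 = ν + m := by ring
  rw [e, h]
  have h0 : ν + (m : ℝ) ≠ 0 := by positivity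
  have hp : Real.Gamma (ν + m) ≠ 0 := (Real.Gamma_pos_of_pos (by positivity)).ne'
  have hf : (Nat.factorial m : ℝ) ≠ 0 := by positivity
  field_simp

lemma bF_hasDeriv (ν : ℝ) (hν : 0 ≤ ν) (x : ℝ) : HasDerivAt (bF ν) (- bF (ν + 1) x) x := by
  set R := |x| + 1 with hR
  have hR0 : 0 < R := by positivity
  have hb : ∀ m : ℕ, ∀ y ∈ Metric.ball (0 : ℝ) R, ‖bC ν m * (m * y ^ (m - 1))‖ ≤
      (Real.Gamma (ν + 1))⁻¹ * (m * R ^ (m - 1) / (Nat.factorial m)) := by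
    intro m y hy
    have hy' : |y| ≤ R := by simpa using (mem_ball_zero_iff.1 hy).le
    rw [Real.norm_eq_abs, abs_mul, abs_mul, abs_pow, Nat.abs_cast]
    calc _ ≤ (Real.Gamma (ν + 1))⁻¹ * (1 / (Nat.factorial m)) * (m * R ^ (m-1)) := by
          gcongr; exact bC_abs ν hν m
      _ = _ := by ring
  have hs : Summable (fun m : ℕ => (Real.Gamma (ν + 1))⁻¹ * (m * R ^ (m - 1) / (Nat.factorial m))) := by
    apply Summable.mul_left
    rw [← summable_nat_add_iff 1]
    refine (Real.summable_pow_div_factorial R).congr fun n => ?_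
    rw [Nat.factorial_succ]
    push_cast
    have : (n : ℝ) + 1 ≠ 0 := by positivity
    field_simp
  have hx : x ∈ Metric.ball (0 : ℝ) R := by simp [hR]
  have key := hasDerivAt_tsum_of_isPreconnected (g := fun m y => bC ν m * y ^ m) hs Metric.isOpen_ball
    (convex_ball (0 : ℝ) R).isPreconnected
    (fun m y _ => ((hasDerivAt_pow m y).const_mul (bC ν m))) hb hx (bC_summable ν hν x) hx
  have hsum : Summable (fun m : ℕ => bC ν m * (m * x ^ (m - 1))) :=
    Summable.of_norm_bounded hs (fun m => hb m x hx)
  have e : ∑' m : ℕ, bC ν m * (m * x ^ (m - 1)) = - bF (ν + 1) x := by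
    rw [hsum.tsum_eq_zero_add]
    simp only [Nat.cast_zero, zero_mul, mul_zero, zero_add, Nat.add_sub_cancel]
    unfold bF
    rw [← tsum_neg]
    congr 1
    ext n
    rw [← mul_assoc]
    push_cast
    rw [bC_succ]; ring
  rw [e] at key
  exact key

lemma bF_rec (ν : ℝ) (hν : 1 ≤ ν) (x : ℝ) :
    bF (ν - 1) x = ν * bF ν x - x * bF (ν + 1) x := by
  have h1 := bC_summable (ν - 1) (by linarith) x
  have h2 := bC_summable ν (by linarith) x
  have h3 : Summable (fun m : ℕ => m * bC ν m * x ^ m) := by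
    refine (h1.sub (h2.mul_left ν)).congr fun m => ?_
    rw [bC_pred ν hν]; ring
  have e : ∑' m : ℕ, m * bC ν m * x ^ m = - (x * bF (ν + 1) x) := by
    rw [h3.tsum_eq_zero_add]
    simp only [Nat.cast_zero, zero_mul, zero_add]
    unfold bF
    rw [← tsum_mul_left, ← tsum_neg]
    congr 1
    ext n
    push_cast
    rw [mul_comm ((n : ℝ) + 1), bC_succ]; ring
  have : bF (ν - 1) x = ν * bF ν x + ∑' m : ℕ, m * bC ν m * x ^ m := by
    unfold bF
    rw [← tsum_mul_left, ← (h2.mul_left ν).tsum_add h3]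
    congr 1
    ext m
    rw [bC_pred ν hν]; ring
  rw [this, e]; ring

lemma bF_zero (ν : ℝ) : bF ν 0 = (Real.Gamma (ν + 1))⁻¹ := by
  unfold bF
  rw [tsum_eq_single 0]
  · simp [bC]
  · intro m hm; simp [hm]

lemma bJ_eq (ν z : ℝ) (hz : 0 < z) : besselJ ν z = (z / 2) ^ ν * bF ν (z ^ 2 / 4) := by
  unfold besselJ bF
  rw [← tsum_mul_left]
  congr 1
  ext m
  have : (z / 2) ^ (ν + 2 * (m : ℝ)) = (z / 2) ^ ν * (z ^ 2 / 4) ^ m := by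
    rw [Real.rpow_add (by positivity), Real.rpow_mul (by positivity), Real.rpow_natCast]
    congr 2
    norm_num; ring
  rw [this, bC]; ring

lemma bJ_deriv_aux (ν z : ℝ) (hν : 0 ≤ ν) (hz : 0 < z) :
    HasDerivAt (besselJ ν) (ν / z * besselJ ν z - besselJ (ν + 1) z) z := by
  have h1 : HasDerivAt (fun y : ℝ => (y / 2) ^ ν * bF ν (y ^ 2 / 4))
      ((1 / 2 * ν * (z / 2) ^ (ν - 1)) * bF ν (z ^ 2 / 4) +
        (z / 2) ^ ν * (- bF (ν + 1) (z ^ 2 / 4) * (((2 : ℕ) : ℝ) * z ^ (2 - 1) / 4))) z := by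
    apply HasDerivAt.mul
    · exact ((hasDerivAt_id z).div_const 2).rpow_const (Or.inl (by simp; positivity))
    · exact (bF_hasDeriv ν hν (z ^ 2 / 4)).comp z ((hasDerivAt_pow 2 z).div_const 4)
  have h2 : besselJ ν =ᶠ[𝓝 z] (fun y : ℝ => (y / 2) ^ ν * bF ν (y ^ 2 / 4)) := by
    filter_upwards [lt_mem_nhds hz] with y hy using bJ_eq ν y hy
  refine (h1.congr_of_eventuallyEq h2).congr_deriv ?_
  rw [bJ_eq _ _ hz, bJ_eq _ _ hz, Real.rpow_sub_one (by positivity), Real.rpow_add_one (by positivity)]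
  field_simp
  norm_num
  ring

lemma bJ_rec (ν z : ℝ) (hν : 1 ≤ ν) (hz : 0 < z) :
    besselJ (ν - 1) z = 2 * ν / z * besselJ ν z - besselJ (ν + 1) z := by
  rw [bJ_eq _ _ hz, bJ_eq _ _ hz, bJ_eq _ _ hz, bF_rec ν hν, Real.rpow_sub_one (by positivity),
    Real.rpow_add_one (by positivity)]
  field_simp
  ring

lemma bJ_deriv (ν z : ℝ) (hν : 1 ≤ ν) (hz : 0 < z) :
    HasDerivAt (besselJ ν) (besselJ (ν - 1) z - ν / z * besselJ ν z) z := by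
  convert bJ_deriv_aux ν z (by linarith) hz using 1
  rw [bJ_rec ν z hν hz]; ring

lemma bI_deriv (ν z : ℝ) (hν : 1 ≤ ν) (hz : 0 < z) :
    HasDerivAt (besselJ (ν - 1)) ((ν - 1) / z * besselJ (ν - 1) z - besselJ ν z) z := by
  convert bJ_deriv_aux (ν - 1) z (by linarith) hz using 2
  rw [sub_add_cancel]

lemma b_near (ν : ℝ) (hν : 1 ≤ ν) : ∃ δ > 0, ∀ z, 0 < z → z < δ →
    0 < besselJ ν z ∧ 0 < z * besselJ (ν - 1) z - ν * besselJ ν z := by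
  have c1 : Continuous (bF ν) := continuous_iff_continuousAt.2 fun x =>
    (bF_hasDeriv ν (by linarith) x).continuousAt
  have c2 : Continuous (bF (ν - 1)) := continuous_iff_continuousAt.2 fun x =>
    (bF_hasDeriv (ν - 1) (by linarith) x).continuousAt
  have d1 : Continuous (fun z : ℝ => bF ν (z ^ 2 / 4)) := by fun_prop
  have d2 : Continuous (fun z : ℝ => 2 * bF (ν - 1) (z ^ 2 / 4) - ν * bF ν (z ^ 2 / 4)) := by fun_prop
  have p0 : 0 < Real.Gamma ν := Real.Gamma_pos_of_pos (by positivity)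
  have pe : Real.Gamma (ν + 1) = ν * Real.Gamma ν := Real.Gamma_add_one (by positivity)
  have p1 : (0 : ℝ) < bF ν ((0 : ℝ) ^ 2 / 4) := by
    norm_num [bF_zero]; exact Real.Gamma_pos_of_pos (by positivity)
  have p2 : (0 : ℝ) < 2 * bF (ν - 1) ((0 : ℝ) ^ 2 / 4) - ν * bF ν ((0 : ℝ) ^ 2 / 4) := by
    norm_num [bF_zero, pe]
    field_simp
    norm_num
  have e := (d1.continuousAt.eventually (lt_mem_nhds p1)).and
    (d2.continuousAt.eventually (lt_mem_nhds p2))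
  obtain ⟨δ, hδ, h⟩ := Metric.eventually_nhds_iff.1 e
  refine ⟨δ, hδ, fun z hz hzd => ?_⟩
  obtain ⟨q1, q2⟩ := h (y := z) (by simpa [abs_of_pos hz] using hzd)
  have hp : 0 < (z / 2) ^ ν := by positivity
  rw [bJ_eq _ _ hz, bJ_eq _ _ hz]
  refine ⟨mul_pos hp q1, ?_⟩
  have := mul_pos hp q2
  refine lt_of_lt_of_eq this ?_
  rw [Real.rpow_sub_one (by positivity)]
  field_simp

lemma slope_right {f : ℝ → ℝ} {d x b : ℝ} (hd : HasDerivAt f d x) (hx : f x = 0) (hb : x < b)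
    (hf : ∀ y, x < y → y < b → 0 < f y) : 0 ≤ d := by
  have h := (hasDerivAt_iff_tendsto_slope.1 hd).mono_left
    (nhdsWithin_mono x (fun y (hy : x < y) => ne_of_gt hy) : 𝓝[>] x ≤ 𝓝[≠] x)
  refine ge_of_tendsto h ?_
  filter_upwards [Ioo_mem_nhdsGT hb] with y hy
  rw [slope_def_field, hx, sub_zero]
  exact (div_pos (hf y hy.1 hy.2) (sub_pos.2 hy.1)).le

lemma slope_left {f : ℝ → ℝ} {d x a : ℝ} (hd : HasDerivAt f d x) (hx : f x = 0) (ha : a < x)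
    (hf : ∀ y, a < y → y < x → 0 < f y) : d ≤ 0 := by
  have h := (hasDerivAt_iff_tendsto_slope.1 hd).mono_left
    (nhdsWithin_mono x (fun y (hy : y < x) => ne_of_lt hy) : 𝓝[<] x ≤ 𝓝[≠] x)
  refine le_of_tendsto h ?_
  filter_upwards [Ioo_mem_nhdsLT ha] with y hy
  rw [slope_def_field, hx, sub_zero]
  exact (div_neg_of_pos_of_neg (hf y hy.1 hy.2) (sub_neg.2 hy.2)).le

lemma slope_left_le {f : ℝ → ℝ} {d x a : ℝ} (hd : HasDerivAt f d x) (hx : f x = 0) (ha : a < x)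
    (hf : ∀ y, a < y → y < x → f y ≤ 0) : 0 ≤ d := by
  have h := (hasDerivAt_iff_tendsto_slope.1 hd).mono_left
    (nhdsWithin_mono x (fun y (hy : y < x) => ne_of_lt hy) : 𝓝[<] x ≤ 𝓝[≠] x)
  refine ge_of_tendsto h ?_
  filter_upwards [Ioo_mem_nhdsLT ha] with y hy
  rw [slope_def_field, hx, sub_zero]
  exact div_nonneg_of_nonpos (hf y hy.1 hy.2) (sub_neg.2 hy.2).le

lemma uniq_neg {g g' : ℝ → ℝ} {a b : ℝ} (hd : ∀ z, a < z → z < b → HasDerivAt g (g' z) z)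
    (hn : ∀ z, a < z → z < b → g z = 0 → g' z < 0) {p q : ℝ} (hp : a < p) (hpq : p < q)
    (hq : q < b) (h : g p ≤ 0) : g q < 0 := by
  have key := image_le_of_deriv_right_lt_deriv_boundary (f := g) (f' := g') (a := p) (b := q)
    (B := fun _ => 0) (B' := fun _ => 0)
    (fun x hx => (hd x (by linarith [hx.1]) (by linarith [hx.2])).continuousAt.continuousWithinAt)
    (fun x hx => (hd x (by linarith [hx.1]) (by linarith [hx.2])).hasDerivWithinAt) h
    (fun x => hasDerivAt_const x 0)
    (fun x hx h0 => hn x (by linarith [hx.1]) (by linarith [hx.2]) h0)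
  rcases (key (right_mem_Icc.2 hpq.le)).lt_or_eq with h1 | h1
  · exact h1
  · exfalso
    have := slope_left_le (hd q (by linarith) hq) h1 hpq
      (fun y h1 h2 => key ⟨h1.le, h2.le⟩)
    linarith [hn q (by linarith) hq h1]

lemma one_zero {g g' : ℝ → ℝ} {a b : ℝ} (hab : a < b)
    (hd : ∀ z, a ≤ z → z ≤ b → HasDerivAt g (g' z) z)
    (hn : ∀ z, a < z → z < b → g z = 0 → g' z < 0) (ha : 0 < g a) (hb : g b < 0) :
    ∃ p, a < p ∧ p < b ∧ g p = 0 ∧ ∀ z, a < z → z ≤ b →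
      (g z = 0 → z = p) ∧ (0 < g z → z < p) ∧ (g z < 0 → p < z) := by
  have hc : ContinuousOn g (Icc a b) := fun z hz =>
    (hd z hz.1 hz.2).continuousAt.continuousWithinAt
  obtain ⟨p, hp, h0⟩ := intermediate_value_Ioo' hab.le hc ⟨hb, ha⟩
  have U := fun {p q : ℝ} => uniq_neg (p := p) (q := q)
    (fun z h1 h2 => hd z (le_of_lt h1) (le_of_lt h2)) hn
  have hgt : ∀ z, p < z → z ≤ b → g z < 0 := by
    intro z h1 h2
    rcases h2.lt_or_eq with h2 | h2
    · exact U hp.1 h1 h2 h0.le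
    · rw [h2]; exact hb
  have hlt : ∀ z, a < z → z < p → 0 < g z := by
    intro z h1 h2
    by_contra h3
    have := U h1 h2 hp.2 (not_lt.1 h3)
    linarith
  refine ⟨p, hp.1, hp.2, h0, fun z h1 h2 => ?_⟩
  rcases lt_trichotomy z p with h | h | h
  · have := hlt z h1 h
    exact ⟨fun e => by linarith, fun _ => h, fun e => by linarith⟩
  · subst h
    exact ⟨fun e => rfl, fun e => by linarith, fun e => by linarith⟩
  · have := hgt z h h2
    exact ⟨fun e => by linarith, fun _ => by linarith, fun e => h⟩

def Trip (J I : ℝ → ℝ) (ν a b : ℝ) : Prop :=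
  ∃ p1 p2 p3, a < p1 ∧ p1 < p2 ∧ p2 < p3 ∧ p3 < b ∧
    I p1 - J p1 = 0 ∧ p2 * I p2 - ν * J p2 = 0 ∧ I p3 + J p3 = 0 ∧
    ∀ z, a < z → z ≤ b → (I z - J z = 0 → z = p1) ∧ (z * I z - ν * J z = 0 → z = p2) ∧
      (I z + J z = 0 → z = p3)

lemma core {J I : ℝ → ℝ} {ν a b : ℝ} (hν : 1 ≤ ν)
    (hJ : ∀ z, 0 < z → HasDerivAt J (I z - ν / z * J z) z)
    (hI : ∀ z, 0 < z → HasDerivAt I ((ν - 1) / z * I z - J z) z)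
    (ha : ν ≤ a) (hab : a < b) (hpos : ∀ z, a < z → z < b → 0 < J z) (hb0 : J b = 0)
    (hIb : I b < 0) (h1 : 0 < I a - J a) (h2 : 0 < a * I a - ν * J a) (h3 : 0 < I a + J a) :
    Trip J I ν a b := by
  have dd : ∀ z, 0 < z → HasDerivAt (fun z => z * I z - ν * J z) ((ν ^ 2 / z - z) * J z) z := by
    intro z hz
    refine (((hasDerivAt_id z).mul (hI z hz)).sub ((hJ z hz).const_mul ν)).congr_deriv ?_
    simp only [id]
    field_simp
    ring
  obtain ⟨p1, a1, b1, z1, u1⟩ := one_zero (g := fun z => I z - J z) hab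
    (fun z h _ => (hI z (by linarith)).sub (hJ z (by linarith)))
    (by
      intro z hz1 hz2 h
      have hz : 0 < z := by linarith
      have e : I z = J z := by linarith
      have : (ν - 1) / z * I z - J z - (I z - ν / z * J z) = - ((2 * z - (2 * ν - 1)) / z * J z) := by
        rw [e]; field_simp; ring
      rw [this]
      have := hpos z hz1 hz2
      have h4 : 0 < 2 * z - (2 * ν - 1) := by linarith
      have := mul_pos (div_pos h4 hz) this
      linarith) h1 (by simp [hb0, hIb])
  obtain ⟨p2, a2, b2, z2, u2⟩ := one_zero (g := fun z => z * I z - ν * J z) hab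
    (fun z h _ => dd z (by linarith))
    (by
      intro z hz1 hz2 h
      have hz : 0 < z := by linarith
      have := hpos z hz1 hz2
      refine mul_neg_of_neg_of_pos ?_ this
      rw [sub_neg, div_lt_iff₀ hz]
      nlinarith) h2 (by
        simp only [hb0, mul_zero, sub_zero]
        exact mul_neg_of_pos_of_neg (by linarith) hIb)
  obtain ⟨p3, a3, b3, z3, u3⟩ := one_zero (g := fun z => I z + J z) hab
    (fun z h _ => (hI z (by linarith)).add (hJ z (by linarith)))
    (by
      intro z hz1 hz2 h
      have hz : 0 < z := by linarith
      have e : I z = - J z := by linarith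
      have : (ν - 1) / z * I z - J z + (I z - ν / z * J z) = - ((2 * z + (2 * ν - 1)) / z * J z) := by
        rw [e]; field_simp; ring
      rw [this]
      have := hpos z hz1 hz2
      have h4 : 0 < 2 * z + (2 * ν - 1) := by linarith
      have := mul_pos (div_pos h4 hz) this
      linarith) h3 (by simp [hb0, hIb])
  have q1 := hpos p1 a1 b1
  have q3 := hpos p3 a3 b3
  refine ⟨p1, p2, p3, a1, ?_, ?_, b3, z1, z2, z3, fun z h h' => ⟨(u1 z h h').1, (u2 z h h').1, (u3 z h h').1⟩⟩
  · apply (u2 p1 a1 b1.le).2.1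
    have e : I p1 = J p1 := by linarith
    show 0 < p1 * I p1 - ν * J p1
    rw [e]
    nlinarith
  · apply (u2 p3 a3 b3.le).2.2
    have e : I p3 = - J p3 := by linarith
    show p3 * I p3 - ν * J p3 < 0
    rw [e]
    nlinarith

lemma core2 {J I : ℝ → ℝ} {ν a b : ℝ} (hν : 1 ≤ ν)
    (hJ : ∀ z, 0 < z → HasDerivAt J (I z - ν / z * J z) z)
    (hI : ∀ z, 0 < z → HasDerivAt I ((ν - 1) / z * I z - J z) z)
    (ha : ν ≤ a) (hab : a < b) (hpos : ∀ z, a < z → z < b → 0 < J z) (ha0 : J a = 0) (hb0 : J b = 0)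
    (hIa : I a ≠ 0) (hIb : I b ≠ 0) :
    Trip J I ν a b := by
  have A := slope_right (hJ a (by linarith)) ha0 hab hpos
  have B := slope_left (hJ b (by linarith)) hb0 hab hpos
  rw [ha0, mul_zero, sub_zero] at A
  rw [hb0, mul_zero, sub_zero] at B
  have A' := lt_of_le_of_ne A hIa.symm
  have B' := lt_of_le_of_ne B hIb
  refine core hν hJ hI ha hab hpos hb0 B' ?_ ?_ ?_ <;> rw [ha0] <;> try linarith
  rw [mul_zero, sub_zero]
  exact mul_pos (by linarith) A'

lemma sign_const {J : ℝ → ℝ} {a b : ℝ} (hc : ∀ z, a < z → z < b → ContinuousAt J z)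
    (hn : ∀ z, a < z → z < b → J z ≠ 0) {c : ℝ} (h1 : a < c) (h2 : c < b) (h : 0 < J c) :
    ∀ z, a < z → z < b → 0 < J z := by
  intro z h3 h4
  by_contra h5
  have hC : ContinuousOn J (Ioo a b) := fun z hz => (hc z hz.1 hz.2).continuousWithinAt
  have := isPreconnected_Ioo.intermediate_value (⟨h3, h4⟩ : z ∈ Ioo a b) (⟨h1, h2⟩ : c ∈ Ioo a b) hC
  obtain ⟨w, hw, e⟩ := this ⟨not_lt.1 h5, h.le⟩
  exact hn w hw.1 hw.2 e

lemma core3 {J I : ℝ → ℝ} {ν a b : ℝ} (hν : 1 ≤ ν)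
    (hJ : ∀ z, 0 < z → HasDerivAt J (I z - ν / z * J z) z)
    (hI : ∀ z, 0 < z → HasDerivAt I ((ν - 1) / z * I z - J z) z)
    (ha : ν ≤ a) (hab : a < b) (hne : ∀ z, a < z → z < b → J z ≠ 0) (ha0 : J a = 0) (hb0 : J b = 0)
    (hIa : I a ≠ 0) (hIb : I b ≠ 0) :
    Trip J I ν a b := by
  have m1 : a < (a + b) / 2 := by linarith
  have m2 : (a + b) / 2 < b := by linarith
  rcases (hne _ m1 m2).lt_or_gt with h | h
  · have hJ' : ∀ z, 0 < z → HasDerivAt (fun z => - J z) (- I z - ν / z * - J z) z := fun z hz =>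
      (hJ z hz).neg.congr_deriv (by ring)
    have hI' : ∀ z, 0 < z → HasDerivAt (fun z => - I z) ((ν - 1) / z * - I z - - J z) z := fun z hz =>
      (hI z hz).neg.congr_deriv (by ring)
    obtain ⟨p1, p2, p3, i1, i2, i3, i4, z1, z2, z3, u⟩ :=
      core2 (J := fun z => - J z) (I := fun z => - I z) hν hJ' hI' ha hab
      (sign_const (fun z h _ => (hJ' z (by linarith)).continuousAt)
        (fun z h1 h2 => neg_ne_zero.2 (hne z h1 h2)) m1 m2 (by linarith))
      (by simp [ha0]) (by simp [hb0]) (by simp [hIa]) (by simp [hIb])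
    refine ⟨p1, p2, p3, i1, i2, i3, i4, by linarith, by linarith, by linarith, fun z h h' => ?_⟩
    obtain ⟨v1, v2, v3⟩ := u z h h'
    exact ⟨fun e => v1 (by linarith), fun e => v2 (by linarith), fun e => v3 (by linarith)⟩
  · exact core2 hν hJ hI ha hab
      (sign_const (fun z h _ => (hJ z (by linarith)).continuousAt) hne m1 m2 h) ha0 hb0 hIa hIb

lemma I_ne {J I : ℝ → ℝ} {ν δ : ℝ} (hν : 1 ≤ ν)
    (hJ : ∀ z, 0 < z → HasDerivAt J (I z - ν / z * J z) z)
    (hI : ∀ z, 0 < z → HasDerivAt I ((ν - 1) / z * I z - J z) z)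
    (hδ : 0 < δ) (hn : ∀ z, 0 < z → z < δ → 0 < J z) {a : ℝ} (ha : 0 < a) (hJa : J a = 0) :
    I a ≠ 0 := by
  intro hIa
  obtain ⟨N, hN⟩ := exists_nat_ge (2 * ν)
  have hd : ∀ z, 0 < z → HasDerivAt (fun z => z ^ N * (I z ^ 2 + J z ^ 2))
      (z ^ N / z * ((N + 2 * (ν - 1)) * I z ^ 2 + (N - 2 * ν) * J z ^ 2)) z := by
    intro z hz
    refine ((hasDerivAt_pow N z).mul (((hI z hz).pow 2).add ((hJ z hz).pow 2))).congr_deriv ?_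
    have hN0 : N ≠ 0 := by rintro rfl; norm_num at hN; linarith
    obtain ⟨M, rfl⟩ := Nat.exists_eq_succ_of_ne_zero hN0
    simp only [Nat.succ_eq_add_one, Nat.add_sub_cancel, Pi.add_apply, Pi.pow_apply]
    field_simp
    push_cast
    ring
  have hm : MonotoneOn (fun z => z ^ N * (I z ^ 2 + J z ^ 2)) (Ioi 0) := by
    apply monotoneOn_of_deriv_nonneg (convex_Ioi 0)
    · exact fun z hz => (hd z hz).continuousAt.continuousWithinAt
    · rw [interior_Ioi]; exact fun z hz => (hd z hz).differentiableAt.differentiableWithinAt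
    · rw [interior_Ioi]
      intro z hz
      rw [(hd z hz).deriv]
      have hz' : 0 < z := hz
      have : 0 ≤ (N : ℝ) - 2 * ν := by linarith
      have : 0 ≤ (N : ℝ) + 2 * (ν - 1) := by linarith
      positivity
  set w := min a δ / 2 with hw
  have hw0 : 0 < w := by positivity
  have hwa : w < a := by have := min_le_left a δ; linarith
  have hwd : w < δ := by have := min_le_right a δ; linarith
  have h1 := hm (show w ∈ Ioi 0 from hw0) (show a ∈ Ioi 0 from ha) hwa.le
  simp only [hJa, hIa] at h1
  have := hn w hw0 hwd
  have : 0 < w ^ N * (I w ^ 2 + J w ^ 2) := by positivity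
  norm_num at h1
  linarith

lemma first {J I : ℝ → ℝ} {ν δ b : ℝ} (hν : 1 ≤ ν)
    (hJ : ∀ z, 0 < z → HasDerivAt J (I z - ν / z * J z) z)
    (hI : ∀ z, 0 < z → HasDerivAt I ((ν - 1) / z * I z - J z) z)
    (hδ : 0 < δ) (hn : ∀ z, 0 < z → z < δ → 0 < J z ∧ 0 < z * I z - ν * J z)
    (hb : 0 < b) (hb0 : J b = 0) (hne : ∀ z, 0 < z → z < b → J z ≠ 0) :
    ν < b ∧ Trip J I ν 0 b := by
  have dd : ∀ z, 0 < z → HasDerivAt (fun z => z * I z - ν * J z) ((ν ^ 2 / z - z) * J z) z := by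
    intro z hz
    refine (((hasDerivAt_id z).mul (hI z hz)).sub ((hJ z hz).const_mul ν)).congr_deriv ?_
    simp only [id]
    field_simp
    ring
  have hpos : ∀ z, 0 < z → z < b → 0 < J z := by
    have h1 := min_le_left b δ
    have h2 := min_le_right b δ
    have h3 : 0 < min b δ := by positivity
    exact sign_const (c := min b δ / 2) (fun z h _ => (hJ z h).continuousAt) hne
      (by linarith) (by linarith) (hn _ (by linarith) (by linarith)).1
  -- W positive
  have hW : ∀ z, 0 < z → z ≤ ν → z ≤ b → 0 < z * I z - ν * J z := by
    intro z hz hzν hzb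
    set w := min z δ / 2 with hw
    have hw0 : 0 < w := by positivity
    have hwa : w < z := by have := min_le_left z δ; linarith
    have hwd : w < δ := by have := min_le_right z δ; linarith
    have hm : MonotoneOn (fun z => z * I z - ν * J z) (Icc w z) := by
      apply monotoneOn_of_deriv_nonneg (convex_Icc w z)
      · exact fun y hy => (dd y (by linarith [hy.1])).continuousAt.continuousWithinAt
      · rw [interior_Icc]
        exact fun y hy => (dd y (by linarith [hy.1])).differentiableAt.differentiableWithinAt
      · rw [interior_Icc]
        intro y hy
        have hy0 : 0 < y := by linarith [hy.1]
        rw [(dd y hy0).deriv]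
        have := hpos y hy0 (by linarith [hy.2])
        refine mul_nonneg ?_ this.le
        rw [sub_nonneg, le_div_iff₀ hy0]
        nlinarith [hy.2]
    have := hm (left_mem_Icc.2 hwa.le) (right_mem_Icc.2 hwa.le) hwa.le
    have h2 := (hn w hw0 hwd).2
    simp only at this
    linarith
  have hIb : I b < 0 := by
    have B := slope_left (hJ b hb) hb0 hb hpos
    rw [hb0, mul_zero, sub_zero] at B
    exact lt_of_le_of_ne B (I_ne hν hJ hI hδ (fun z h h' => (hn z h h').1) hb hb0)
  have hνb : ν < b := by
    by_contra h
    have := hW b hb (not_lt.1 h) le_rfl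
    rw [hb0] at this
    nlinarith
  have g1 : ∀ z, 0 < z → z ≤ ν → 0 < I z - J z ∧ 0 < z * I z - ν * J z ∧ 0 < I z + J z := by
    intro z hz hzν
    have h1 := hW z hz hzν (by linarith)
    have h2 := hpos z hz (by linarith)
    have h3 : 0 < I z - J z := by
      by_contra h
      nlinarith
    exact ⟨h3, h1, by linarith⟩
  refine ⟨hνb, ?_⟩
  obtain ⟨e1, e2, e3⟩ := g1 ν (by linarith) le_rfl
  obtain ⟨p1, p2, p3, i1, i2, i3, i4, z1, z2, z3, u⟩ :=
    core hν hJ hI le_rfl hνb (fun z h h' => hpos z (by linarith) h') hb0 hIb e1 e2 e3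
  refine ⟨p1, p2, p3, by linarith, i2, i3, i4, z1, z2, z3, fun z h h' => ?_⟩
  by_cases hz : ν < z
  · exact u z hz h'
  · obtain ⟨f1, f2, f3⟩ := g1 z h (not_lt.1 hz)
    exact ⟨fun e => by linarith, fun e => by linarith, fun e => by linarith⟩

lemma count {g : ℝ → ℝ} {x a P : ℕ → ℝ} (hx : EnumPosZeros g x) (ha0 : a 0 = 0)
    (h1 : ∀ n, a n < P n) (h2 : ∀ n, P n < a (n + 1)) (h3 : ∀ n, g (P n) = 0)
    (h4 : ∀ n z, a n < z → z ≤ a (n + 1) → g z = 0 → z = P n) : ∀ n, x (n + 1) = P n := by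
  obtain ⟨hm, hz, hs⟩ := hx
  have ap : ∀ n, 0 ≤ a n := by
    intro n
    induction n with
    | zero => exact ha0.ge
    | succ n ih => linarith [h1 n, h2 n]
  intro n
  induction n with
  | zero =>
    obtain ⟨k, hk, e⟩ := hs (P 0) (by linarith [h1 0]) (h3 0)
    have : x 1 ≤ x k := hm.monotoneOn (show (1 : ℕ) ∈ Ici 1 from le_refl 1) hk hk
    apply h4 0 _ _ _ (hz 1 le_rfl).2
    · rw [ha0]; exact (hz 1 le_rfl).1
    · linarith [h2 0]
  | succ n ih =>
    obtain ⟨k, hk, e⟩ := hs (P (n + 1)) (by linarith [h1 (n+1), ap (n+1)]) (h3 (n + 1))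
    have hlt : x (n + 1) < x (n + 1 + 1) :=
      hm (show 1 ≤ n + 1 by omega) (show 1 ≤ n + 1 + 1 by omega) (by omega)
    have hkn : n + 1 + 1 ≤ k := by
      by_contra h
      have : x k ≤ x (n + 1) := hm.monotoneOn hk (show 1 ≤ n + 1 by omega) (by omega)
      linarith [h1 (n + 1), h2 n]
    have hle : x (n + 1 + 1) ≤ x k := hm.monotoneOn (show 1 ≤ n + 1 + 1 by omega) hk hkn
    have z0 := (hz (n + 1 + 1) (by omega)).2
    rcases le_or_gt (x (n + 1 + 1)) (a (n + 1)) with h | h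
    · have := h4 n _ (by linarith [h1 n]) h z0
      linarith
    · exact h4 (n + 1) _ h (by linarith [h2 (n + 1)]) z0

/-- For `ν ≥ 1` and every `k ≥ 1`,
`j_{ν,k} < λ⁻_{ν−1,k+1} < j′_{ν,k+1} < λ⁺_{ν−1,k+1} < j_{ν,k+1}`. -/
theorem stmt16 (ν : ℝ) (hν : 1 ≤ ν) (k : ℕ) (hk : 1 ≤ k)
    (jn jpn lam lamp : ℕ → ℝ)
    (hjn : EnumPosZeros (besselJ ν) jn)
    (hjpn : EnumPosZeros (deriv (besselJ ν)) jpn)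
    (hlam : EnumPosZeros (fun z => besselJ (ν - 1) z - besselJ ν z) lam)
    (hlamp : EnumPosZeros (fun z => besselJ (ν - 1) z + besselJ ν z) lamp) :
    jn k < lam (k + 1) ∧ lam (k + 1) < jpn (k + 1) ∧
    jpn (k + 1) < lamp (k + 1) ∧ lamp (k + 1) < jn (k + 1) := by
  have hJ := fun z => bJ_deriv ν z hν
  have hI := fun z => bI_deriv ν z hν
  obtain ⟨δ, hδ, hn⟩ := b_near ν hν
  have hder : ∀ z, 0 < z → (deriv (besselJ ν) z = 0 ↔
      z * besselJ (ν - 1) z - ν * besselJ ν z = 0) := by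
    intro z hz
    rw [(hJ z hz).deriv]
    have : z * besselJ (ν - 1) z - ν * besselJ ν z =
        z * (besselJ (ν - 1) z - ν / z * besselJ ν z) := by field_simp
    rw [this, mul_eq_zero]
    simp [hz.ne']
  have hjn' := hjn
  obtain ⟨hm, hz, hs⟩ := hjn'
  have hfirst := first hν hJ hI hδ hn (hz 1 le_rfl).1 (hz 1 le_rfl).2 (by
    intro z h0 h1 e
    obtain ⟨i, hi, rfl⟩ := hs z h0 e
    have : jn 1 ≤ jn i := hm.monotoneOn (show (1 : ℕ) ∈ Ici 1 from le_refl 1) hi hi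
    linarith)
  set a : ℕ → ℝ := fun n => if n = 0 then 0 else jn n with ha
  have ha0 : a 0 = 0 := by simp [ha]
  have haS : ∀ n, a (n + 1) = jn (n + 1) := by intro n; simp [ha]
  have hne : ∀ i, 1 ≤ i → besselJ (ν - 1) (jn i) ≠ 0 := fun i hi =>
    I_ne hν hJ hI hδ (fun z h h' => (hn z h h').1) (hz i hi).1 (hz i hi).2
  have hT : ∀ n, Trip (besselJ ν) (besselJ (ν - 1)) ν (a n) (a (n + 1)) := by
    intro n
    rcases n with _ | n
    · rw [ha0, haS]; exact hfirst.2
    · rw [haS, haS]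
      have m1 : n + 1 ∈ Ici 1 := show 1 ≤ n + 1 by omega
      have m2 : n + 1 + 1 ∈ Ici 1 := show 1 ≤ n + 1 + 1 by omega
      have h1 : jn 1 ≤ jn (n + 1) := hm.monotoneOn (show (1 : ℕ) ∈ Ici 1 from le_refl 1) m1 m1
      refine core3 hν hJ hI (by linarith [hfirst.1]) (hm m1 m2 (by omega)) ?_
        (hz _ m1).2 (hz _ m2).2 (hne _ m1) (hne _ m2)
      intro z h3 h4 e
      obtain ⟨i, hi, rfl⟩ := hs z (by linarith [hfirst.1]) e
      have i1 := (hm.lt_iff_lt m1 hi).1 h3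
      have i2 := (hm.lt_iff_lt hi m2).1 h4
      omega
  choose P1 P2 P3 i1 i2 i3 i4 z1 z2 z3 u using hT
  have ap : ∀ n, 0 ≤ a n := by
    intro n
    rcases n with _ | n
    · exact ha0.ge
    · rw [haS]; exact (hz _ (by omega)).1.le
  have c1 := count hlam ha0 i1 (fun n => by linarith [i2 n, i3 n, i4 n]) z1
    (fun n z h h' => (u n z h h').1) k
  have c2 := count hjpn (P := P2) ha0 (fun n => by linarith [i1 n, i2 n])
    (fun n => by linarith [i3 n, i4 n])
    (fun n => (hder _ (by linarith [ap n, i1 n, i2 n])).2 (z2 n))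
    (fun n z h h' e => (u n z h h').2.1 ((hder z (by linarith [ap n])).1 e)) k
  have c3 := count hlamp (P := P3) ha0 (fun n => by linarith [i1 n, i2 n, i3 n]) i4 z3
    (fun n z h h' => (u n z h h').2.2) k
  have ek : a k = jn k := by simp [ha]; omega
  rw [c1, c2, c3, ← ek, ← haS k]
  exact ⟨i1 k, i2 k, i3 k, i4 k⟩
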